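/- arXiv:2508.11972 — 5 statements merged into one kernel-verified Lean document; each statement's English description precedes it below -/
import Mathlib

section
/- Let (X, ≤, τ) be an Esakia space, let c ⊆ X be a closed upset, and let x ∈ X with x ∉ c. Then there exists a clopen upset a of (X, ≤, τ) such that c ⊆ a and x ∉ a. -/
theorem esakia_clopen_upset_separation_general {X : Type*} [Preorder X] [TopologicalSpace X]
    [PriestleySpace X] {K : Set X} (hK : IsCompact K) {x : X} (hx : x ∉ upperClosure K) :
    ∃ U : Set X, IsClopen U ∧ IsUpperSet U ∧ K ⊆ U ∧ x ∉ U := by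
  have not_le : ∀ y ∈ K, ¬ y ≤ x := fun y hy hyx => hx (mem_upperClosure.mpr ⟨y, hy, hyx⟩)
  choose! U U_clopen U_upper mem_U notMem_U using
    fun y hy => exists_isClopen_upper_of_not_le (not_le y hy)
  obtain ⟨t, t_subset, K_subset⟩ :=
    hK.elim_nhds_subcover U fun y hy => (U_clopen y hy).isOpen.mem_nhds (mem_U y hy)
  refine ⟨⋃ y ∈ t, U y, ?_, ?_, K_subset, ?_⟩
  · exact isClopen_biUnion_finset fun y hy => U_clopen y (t_subset y hy)
  · exact isUpperSet_iUnion₂ fun y hy => U_upper y (t_subset y hy)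
  · simpa only [Set.mem_iUnion₂, not_exists] using fun y hy => notMem_U y (t_subset y hy)

/-- Let `(X, ≤, τ)` be an Esakia space: `X` a nonempty
partially ordered set with a compact topology such that (i) whenever `x ≰ y`
there is a clopen upset containing `x` but not `y`, and (ii) the downset of
every clopen set is clopen.  If `c` is a closed upset and `x ∉ c`, then there
is a clopen upset `a` with `c ⊆ a` and `x ∉ a`. -/
theorem esakia_clopen_upset_separation
    (X : Type) [Nonempty X] [PartialOrder X] [TopologicalSpace X] [CompactSpace X]
    (sep : ∀ x y : X, ¬ x ≤ y →
      ∃ a : Set X, IsClopen a ∧ IsUpperSet a ∧ x ∈ a ∧ y ∉ a)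
    (down_clopen : ∀ a : Set X, IsClopen a → IsClopen {x : X | ∃ y ∈ a, x ≤ y})
    (c : Set X) (hc_closed : IsClosed c) (hc_up : IsUpperSet c)
    (x : X) (hx : x ∉ c) :
    ∃ a : Set X, IsClopen a ∧ IsUpperSet a ∧ c ⊆ a ∧ x ∉ a := by
  have : PriestleySpace X := ⟨sep _ _⟩
  exact esakia_clopen_upset_separation_general hc_closed.isCompact
    fun h => hx (hc_up.upperClosure.subset h)
end

section
/- A conditional Kripke frame F = (X, ≤, 𝓡) validates the axiom (ex) ((p ∧ q) ⊳ r) → (p ⊳ (q ⊳ r)) if and only if for all upsets a, b of (X, ≤) one has (R_a ∘ R_b) ⊆ (R_{a∩b} ∘ ≤), i.e. whenever x R_a y and y R_b z there exists w with x R_{a∩b} w and w ≤ z. -/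
/-! ## The conditional language `L_⊳` -/

/-- Formulas of the conditional language `L_⊳`, with proposition letters
indexed by the countable set `ℕ`. -/
inductive CForm : Type where
  | var : ℕ → CForm
  | bot : CForm
  | and : CForm → CForm → CForm
  | or : CForm → CForm → CForm
  | imp : CForm → CForm → CForm
  | cond : CForm → CForm → CForm

/-- `⊤ := ⊥ → ⊥`. -/
def cTop : CForm := CForm.imp CForm.bot CForm.bot

/-- `φ ↔ ψ := (φ → ψ) ∧ (ψ → φ)`. -/
def cIff (φ ψ : CForm) : CForm := CForm.and (CForm.imp φ ψ) (CForm.imp ψ φ)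

/-- Uniform substitution of formulas for proposition letters. -/
def psubst (σ : ℕ → CForm) : CForm → CForm
  | CForm.var q => σ q
  | CForm.bot => CForm.bot
  | CForm.and φ ψ => CForm.and (psubst σ φ) (psubst σ ψ)
  | CForm.or φ ψ => CForm.or (psubst σ φ) (psubst σ ψ)
  | CForm.imp φ ψ => CForm.imp (psubst σ φ) (psubst σ ψ)
  | CForm.cond φ ψ => CForm.cond (psubst σ φ) (psubst σ ψ)

/-- The logic `ICK ⊕ Γ`: the smallest set of `L_⊳`-formulas containing an
axiomatisation of intuitionistic propositional logic, the formulas of `Γ`, the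
axioms `(k_c)` and `(n_c)`, closed under uniform substitution, modus ponens and
the two congruence rules. -/
inductive ICK (Γ : Set CForm) : CForm → Prop where
  | prem {φ : CForm} : φ ∈ Γ → ICK Γ φ
  | a1 : ICK Γ (CForm.imp (CForm.and (CForm.var 0) (CForm.var 1)) (CForm.var 0))
  | a2 : ICK Γ (CForm.imp (CForm.and (CForm.var 0) (CForm.var 1)) (CForm.var 1))
  | a3 : ICK Γ (CForm.imp (CForm.imp (CForm.var 0) (CForm.var 1))
      (CForm.imp (CForm.imp (CForm.var 0) (CForm.var 2))
        (CForm.imp (CForm.var 0) (CForm.and (CForm.var 1) (CForm.var 2)))))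
  | a4 : ICK Γ (CForm.imp (CForm.var 0) (CForm.or (CForm.var 0) (CForm.var 1)))
  | a5 : ICK Γ (CForm.imp (CForm.var 1) (CForm.or (CForm.var 0) (CForm.var 1)))
  | a6 : ICK Γ (CForm.imp (CForm.imp (CForm.var 0) (CForm.var 2))
      (CForm.imp (CForm.imp (CForm.var 1) (CForm.var 2))
        (CForm.imp (CForm.or (CForm.var 0) (CForm.var 1)) (CForm.var 2))))
  | a7 : ICK Γ (CForm.imp CForm.bot (CForm.var 0))
  | a8 : ICK Γ (CForm.imp (CForm.var 0) (CForm.imp (CForm.var 1) (CForm.var 0)))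
  | a9 : ICK Γ (CForm.imp
      (CForm.imp (CForm.var 0) (CForm.imp (CForm.var 1) (CForm.var 2)))
      (CForm.imp (CForm.imp (CForm.var 0) (CForm.var 1))
        (CForm.imp (CForm.var 0) (CForm.var 2))))
  | kc : ICK Γ (cIff (CForm.cond (CForm.var 0) (CForm.and (CForm.var 1) (CForm.var 2)))
      (CForm.and (CForm.cond (CForm.var 0) (CForm.var 1))
        (CForm.cond (CForm.var 0) (CForm.var 2))))
  | nc : ICK Γ (cIff (CForm.cond (CForm.var 0) cTop) cTop)
  | subst {φ : CForm} (σ : ℕ → CForm) : ICK Γ φ → ICK Γ (psubst σ φ)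
  | mp {φ ψ : CForm} : ICK Γ (CForm.imp φ ψ) → ICK Γ φ → ICK Γ ψ
  | congL {φ ψ χ : CForm} :
      ICK Γ (cIff φ ψ) → ICK Γ (cIff (CForm.cond φ χ) (CForm.cond ψ χ))
  | congR {φ ψ χ : CForm} :
      ICK Γ (cIff φ ψ) → ICK Γ (cIff (CForm.cond χ φ) (CForm.cond χ ψ))

/-! ## Conditional Kripke frames and semantics -/

/-- `a` is an upset (upward closed set) w.r.t. the relation `le`. -/
def IsUpset {X : Type} (le : X → X → Prop) (a : Set X) : Prop :=
  ∀ ⦃x y : X⦄, le x y → x ∈ a → y ∈ a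

/-- The upward closure `↑s` of a set `s` w.r.t. the relation `le`. -/
def upCl {X : Type} (le : X → X → Prop) (s : Set X) : Set X :=
  {z | ∃ y ∈ s, le y z}

/-- Truth sets of `L_⊳`-formulas, by intuitionistic Kripke semantics for the
propositional connectives, where `x ⊨ φ ⊳ ψ` iff every `y` with
`x R_{V(φ)} y` satisfies `ψ` (here `V(φ)` is the truth set of `φ`). -/
def csat {X : Type} (le : X → X → Prop) (R : Set X → X → X → Prop)
    (V : ℕ → Set X) : CForm → Set X
  | CForm.var p => V p
  | CForm.bot => ∅
  | CForm.and φ ψ => csat le R V φ ∩ csat le R V ψ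
  | CForm.or φ ψ => csat le R V φ ∪ csat le R V ψ
  | CForm.imp φ ψ => {x | ∀ y, le x y → y ∈ csat le R V φ → y ∈ csat le R V ψ}
  | CForm.cond φ ψ => {x | ∀ y, R (csat le R V φ) x y → y ∈ csat le R V ψ}

/-- A conditional Kripke frame: a nonempty preordered set `(X, le)` with a
family of relations `R a` (indexed by the upsets `a`) satisfying the coherence
condition `(≤ ∘ R_a) ⊆ (R_a ∘ ≤)`. -/
structure CondFrame where
  X : Type
  ne : Nonempty X
  le : X → X → Prop
  le_refl : ∀ x, le x x
  le_trans : ∀ ⦃x y z⦄, le x y → le y z → le x z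
  R : Set X → X → X → Prop
  coh : ∀ a : Set X, IsUpset le a →
    ∀ ⦃x y z⦄, le x y → R a y z → ∃ w, R a x w ∧ le w z

/-- Validity on a conditional Kripke frame: truth at every world under every
valuation of the proposition letters by upsets. -/
def CondFrame.valid (F : CondFrame) (φ : CForm) : Prop :=
  ∀ V : ℕ → Set F.X, (∀ p, IsUpset F.le (V p)) → ∀ x, x ∈ csat F.le F.R V φ

/-! ## Conditional Heyting algebras -/

/-- A conditional Heyting algebra: a Heyting algebra with a binary operation
`cond` (written `⊳` in the paper) preserving finite meets in its second
argument. -/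
class CondHeyting (A : Type) extends HeytingAlgebra A where
  cond : A → A → A
  cond_inf : ∀ a b c : A, cond a (b ⊓ c) = cond a b ⊓ cond a c
  cond_top : ∀ a : A, cond a ⊤ = ⊤

/-- Evaluation of an `L_⊳`-formula in a conditional Heyting algebra under an
assignment `σ` of the proposition letters. -/
def evalCHA {A : Type} [CondHeyting A] (σ : ℕ → A) : CForm → A
  | CForm.var p => σ p
  | CForm.bot => ⊥
  | CForm.and φ ψ => evalCHA σ φ ⊓ evalCHA σ ψ
  | CForm.or φ ψ => evalCHA σ φ ⊔ evalCHA σ ψ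
  | CForm.imp φ ψ => evalCHA σ φ ⇨ evalCHA σ ψ
  | CForm.cond φ ψ => CondHeyting.cond (evalCHA σ φ) (evalCHA σ ψ)

/-- A formula is satisfied in a conditional Heyting algebra if it evaluates to
`⊤` under every assignment. -/
def chaSat (A : Type) [CondHeyting A] (φ : CForm) : Prop :=
  ∀ σ : ℕ → A, evalCHA σ φ = ⊤

/-- A prime filter: a proper, nonempty, upward closed subset, closed under
binary meets, such that `a ⊔ b ∈ x` implies `a ∈ x` or `b ∈ x`. -/
def IsPrimeFilter {A : Type} [Lattice A] (x : Set A) : Prop :=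
  x.Nonempty ∧ x ≠ Set.univ ∧
  (∀ ⦃a b : A⦄, a ∈ x → a ≤ b → b ∈ x) ∧
  (∀ ⦃a b : A⦄, a ∈ x → b ∈ x → a ⊓ b ∈ x) ∧
  (∀ ⦃a b : A⦄, a ⊔ b ∈ x → a ∈ x ∨ b ∈ x)

/-! ## General conditional frames -/

/-- A general conditional frame `(X, ≤, 𝓡, A)`. -/
structure GenFrame where
  X : Type
  le : X → X → Prop
  le_refl : ∀ x, le x x
  le_trans : ∀ ⦃x y z⦄, le x y → le y z → le x z
  le_antisymm : ∀ ⦃x y⦄, le x y → le y x → x = y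
  A : Set (Set X)
  upA : ∀ a ∈ A, IsUpset le a
  univ_mem : Set.univ ∈ A
  empty_mem : ∅ ∈ A
  inter_mem : ∀ a ∈ A, ∀ b ∈ A, a ∩ b ∈ A
  union_mem : ∀ a ∈ A, ∀ b ∈ A, a ∪ b ∈ A
  R : Set X → X → X → Prop
  himp_mem : ∀ a ∈ A, ∀ b ∈ A, {x | ∀ y, le x y → y ∈ a → y ∈ b} ∈ A
  cimp_mem : ∀ a ∈ A, ∀ b ∈ A, {x | ∀ y, R a x y → y ∈ b} ∈ A
  coh : ∀ a ∈ A, ∀ ⦃x y z⦄, le x y → R a y z → ∃ w, R a x w ∧ le w z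

/-- The carrier of the complex algebra of a general frame: the admissible
upsets. -/
def GenFrame.AUp (G : GenFrame) : Type := {a : Set G.X // a ∈ G.A}

instance GenFrame.instLatticeAUp (G : GenFrame) : Lattice G.AUp where
  le a b := a.val ⊆ b.val
  le_refl a := subset_rfl
  le_trans a b c h h' := Set.Subset.trans h h'
  le_antisymm a b h h' := Subtype.ext (subset_antisymm h h')
  sup a b := ⟨a.val ∪ b.val, G.union_mem _ a.2 _ b.2⟩
  le_sup_left a b := Set.subset_union_left
  le_sup_right a b := Set.subset_union_right
  sup_le a b c h h' := Set.union_subset h h'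
  inf a b := ⟨a.val ∩ b.val, G.inter_mem _ a.2 _ b.2⟩
  inf_le_left a b := Set.inter_subset_left
  inf_le_right a b := Set.inter_subset_right
  le_inf a b c h h' := Set.subset_inter h h'

instance GenFrame.instHeytingAUp (G : GenFrame) : HeytingAlgebra G.AUp :=
  { GenFrame.instLatticeAUp G with
    top := ⟨Set.univ, G.univ_mem⟩
    le_top := fun a => Set.subset_univ _
    bot := ⟨∅, G.empty_mem⟩
    bot_le := fun a => Set.empty_subset _
    himp := fun a b => ⟨{x | ∀ y, G.le x y → y ∈ a.val → y ∈ b.val},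
      G.himp_mem _ a.2 _ b.2⟩
    compl := fun a => ⟨{x | ∀ y, G.le x y → y ∈ a.val → y ∈ (∅ : Set G.X)},
      G.himp_mem _ a.2 _ G.empty_mem⟩
    le_himp_iff := by
      intro a b c
      show a.val ⊆ {x | ∀ y, G.le x y → y ∈ b.val → y ∈ c.val} ↔
        a.val ∩ b.val ⊆ c.val
      constructor
      · rintro h x ⟨hxa, hxb⟩
        exact h hxa x (G.le_refl x) hxb
      · intro h x hxa y hle hyb
        exact h ⟨G.upA a.val a.2 hle hxa, hyb⟩
    himp_bot := fun a => rfl }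

/-- The complex algebra `AUp(G)` of a general frame `G` is a conditional
Heyting algebra, with `a ⊳ b := {x | R_a[x] ⊆ b}`. -/
instance GenFrame.instCondHeytingAUp (G : GenFrame) : CondHeyting G.AUp where
  cond a b := ⟨{x | ∀ y, G.R a.val x y → y ∈ b.val}, G.cimp_mem _ a.2 _ b.2⟩
  cond_inf a b c := Subtype.ext (Set.ext fun x => by
    show (∀ y, G.R a.val x y → y ∈ b.val ∩ c.val) ↔
      (∀ y, G.R a.val x y → y ∈ b.val) ∧ (∀ y, G.R a.val x y → y ∈ c.val)
    constructor
    · intro h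
      exact ⟨fun y hy => (h y hy).1, fun y hy => (h y hy).2⟩
    · rintro ⟨h1, h2⟩ y hy
      exact ⟨h1 y hy, h2 y hy⟩)
  cond_top a := Subtype.ext (Set.ext fun x => by
    show (∀ y, G.R a.val x y → y ∈ (Set.univ : Set G.X)) ↔
      x ∈ (Set.univ : Set G.X)
    exact ⟨fun _ => trivial, fun _ y _ => trivial⟩)

/-! ## Conditional Esakia spaces -/

/-- A conditional Esakia space: an Esakia space `(X, le, top)` together with a
family of relations `R a` indexed by the clopen upsets `a`, such that
`{x | R_a[x] ⊆ b}` is clopen for clopen upsets `a, b`, each `R_a[x]` is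
closed, and `(≤ ∘ R_a ∘ ≤) = R_a`. -/
structure CondEsakia where
  X : Type
  ne : Nonempty X
  le : X → X → Prop
  le_refl : ∀ x, le x x
  le_trans : ∀ ⦃x y z⦄, le x y → le y z → le x z
  le_antisymm : ∀ ⦃x y⦄, le x y → le y x → x = y
  top : TopologicalSpace X
  compact : @CompactSpace X top
  sep : ∀ x y : X, ¬ le x y →
    ∃ a : Set X, @IsClopen X top a ∧ IsUpset le a ∧ x ∈ a ∧ y ∉ a
  down_clopen : ∀ a : Set X, @IsClopen X top a →
    @IsClopen X top {x | ∃ y ∈ a, le x y}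
  R : Set X → X → X → Prop
  box_clopen : ∀ a b : Set X, @IsClopen X top a → IsUpset le a →
    @IsClopen X top b → IsUpset le b →
    @IsClopen X top {x | ∀ y, R a x y → y ∈ b}
  coh : ∀ a : Set X, @IsClopen X top a → IsUpset le a →
    ∀ x z : X, (∃ x' y', le x x' ∧ R a x' y' ∧ le y' z) ↔ R a x z
  im_closed : ∀ a : Set X, @IsClopen X top a → IsUpset le a →
    ∀ x : X, @IsClosed X top {y | R a x y}

/-- `a` is a clopen upset of the conditional Esakia space `S`. -/
def CondEsakia.ClopUp (S : CondEsakia) (a : Set S.X) : Prop :=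
  @IsClopen S.X S.top a ∧ IsUpset S.le a

/-- Validity on a conditional Esakia space: truth at every world under every
valuation of the proposition letters by clopen upsets. -/
def CondEsakia.valid (S : CondEsakia) (φ : CForm) : Prop :=
  ∀ V : ℕ → Set S.X, (∀ p, S.ClopUp (V p)) → ∀ x, x ∈ csat S.le S.R V φ

/-- The family of relations of the empty fill-in `κ_∅(S)`: it agrees with
`S.R` on clopen upsets and is empty on all other sets. -/
def CondEsakia.emptyFill (S : CondEsakia) : Set S.X → S.X → S.X → Prop :=
  fun a x y => S.ClopUp a ∧ S.R a x y

/-- Validity on the empty fill-in `κ_∅(S)`, a conditional Kripke frame: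
truth at every world under every valuation by (arbitrary) upsets. -/
def CondEsakia.emptyFillValid (S : CondEsakia) (φ : CForm) : Prop :=
  ∀ V : ℕ → Set S.X, (∀ p, IsUpset S.le (V p)) →
    ∀ x, x ∈ csat S.le S.emptyFill V φ

/-! ## The modal language `L_□` -/

/-- Formulas of the modal language `L_□`. -/
inductive MForm : Type where
  | var : ℕ → MForm
  | bot : MForm
  | and : MForm → MForm → MForm
  | or : MForm → MForm → MForm
  | imp : MForm → MForm → MForm
  | box : MForm → MForm

/-- The translation `(−)^p : L_□ → L_⊳`: it fixes proposition letters, `⊥`,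
`∧`, `∨`, `→`, and sends `□ψ` to `p ⊳ ψ^p`. -/
def MForm.transl (p : ℕ) : MForm → CForm
  | MForm.var q => CForm.var q
  | MForm.bot => CForm.bot
  | MForm.and φ ψ => CForm.and (φ.transl p) (ψ.transl p)
  | MForm.or φ ψ => CForm.or (φ.transl p) (ψ.transl p)
  | MForm.imp φ ψ => CForm.imp (φ.transl p) (ψ.transl p)
  | MForm.box φ => CForm.cond (CForm.var p) (φ.transl p)

/-- The proposition letter `p` occurs (as a subformula) in a modal formula. -/
def MForm.occurs (p : ℕ) : MForm → Prop
  | MForm.var q => p = q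
  | MForm.bot => False
  | MForm.and φ ψ => φ.occurs p ∨ ψ.occurs p
  | MForm.or φ ψ => φ.occurs p ∨ ψ.occurs p
  | MForm.imp φ ψ => φ.occurs p ∨ ψ.occurs p
  | MForm.box φ => φ.occurs p

/-- Truth sets of `L_□`-formulas in a modal model, by intuitionistic Kripke
semantics with `x ⊨ □φ` iff every `y` with `x R y` satisfies `φ`. -/
def msat {X : Type} (le : X → X → Prop) (R : X → X → Prop)
    (V : ℕ → Set X) : MForm → Set X
  | MForm.var p => V p
  | MForm.bot => ∅
  | MForm.and φ ψ => msat le R V φ ∩ msat le R V ψ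
  | MForm.or φ ψ => msat le R V φ ∪ msat le R V ψ
  | MForm.imp φ ψ => {x | ∀ y, le x y → y ∈ msat le R V φ → y ∈ msat le R V ψ}
  | MForm.box φ => {x | ∀ y, R x y → y ∈ msat le R V φ}

/-- A modal Esakia space: an Esakia space with a relation `R` such that each
`R[x]` is closed and `R = (≤ ∘ R ∘ ≤)`. -/
structure ModalEsakia where
  X : Type
  ne : Nonempty X
  le : X → X → Prop
  le_refl : ∀ x, le x x
  le_trans : ∀ ⦃x y z⦄, le x y → le y z → le x z
  le_antisymm : ∀ ⦃x y⦄, le x y → le y x → x = y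
  top : TopologicalSpace X
  compact : @CompactSpace X top
  sep : ∀ x y : X, ¬ le x y →
    ∃ a : Set X, @IsClopen X top a ∧ IsUpset le a ∧ x ∈ a ∧ y ∉ a
  down_clopen : ∀ a : Set X, @IsClopen X top a →
    @IsClopen X top {x | ∃ y ∈ a, le x y}
  R : X → X → Prop
  im_closed : ∀ x : X, @IsClosed X top {y | R x y}
  coh : ∀ x z : X, (∃ x' y', le x x' ∧ R x' y' ∧ le y' z) ↔ R x z

/-- Validity on a modal Esakia space: truth everywhere under every valuation
by clopen upsets. -/
def ModalEsakia.valid (M : ModalEsakia) (φ : MForm) : Prop :=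
  ∀ V : ℕ → Set M.X, (∀ p, @IsClopen M.X M.top (V p) ∧ IsUpset M.le (V p)) →
    ∀ x, x ∈ msat M.le M.R V φ

/-- Validity on the underlying modal frame `κ(M)` of a modal Esakia space:
truth everywhere under every valuation by arbitrary upsets. -/
def ModalEsakia.frameValid (M : ModalEsakia) (φ : MForm) : Prop :=
  ∀ V : ℕ → Set M.X, (∀ p, IsUpset M.le (V p)) → ∀ x, x ∈ msat M.le M.R V φ

/-- An `L_□`-formula is d-persistent if its validity on a modal Esakia space
implies its validity on the underlying modal frame. -/
def DPersistent (φ : MForm) : Prop :=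
  ∀ M : ModalEsakia, M.valid φ → M.frameValid φ

/-! The axiom says that every upset `V r` containing `R_{a∩b}[x]` contains
`(R_a ∘ R_b)[x]`, where `a = V p` and `b = V q`. As `V r` ranges over all upsets,
it is enough to test the least one containing `R_{a∩b}[x]`, namely its upward
closure, and inclusion in that closure is the frame condition at `x`. -/

section UpwardClosure

variable {X : Type} {le : X → X → Prop} {s t : Set X}

theorem subset_upCl (hrefl : ∀ x, le x x) : s ⊆ upCl le s :=
  fun x hx => ⟨x, hx, hrefl x⟩

theorem isUpset_upCl (htrans : ∀ ⦃x y z⦄, le x y → le y z → le x z) :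
    IsUpset le (upCl le s) := by
  rintro x y hxy ⟨w, hw, hwx⟩
  exact ⟨w, hw, htrans hwx hxy⟩

theorem IsUpset.upCl_subset (ht : IsUpset le t) (hst : s ⊆ t) : upCl le s ⊆ t := by
  rintro z ⟨y, hy, hyz⟩
  exact ht hyz (hst hy)

theorem subset_upCl_iff_forall_isUpset (hrefl : ∀ x, le x x)
    (htrans : ∀ ⦃x y z⦄, le x y → le y z → le x z) :
    t ⊆ upCl le s ↔ ∀ c, IsUpset le c → s ⊆ c → t ⊆ c :=
  ⟨fun hts _ hc hsc => hts.trans (hc.upCl_subset hsc),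
    fun h => h _ (isUpset_upCl htrans) (subset_upCl hrefl)⟩

end UpwardClosure

theorem forall_seq_iff_forall_three {α : Type*} {U : α → Prop} (P : α → α → α → Prop) :
    (∀ V : ℕ → α, (∀ n, U (V n)) → P (V 0) (V 1) (V 2)) ↔
      ∀ a b c, U a → U b → U c → P a b c := by
  refine ⟨fun h a b c ha hb hc => ?_, fun h V hV => h _ _ _ (hV 0) (hV 1) (hV 2)⟩
  let V : ℕ → α
    | 0 => a
    | 1 => b
    | _ => c
  have hV : ∀ n, U (V n)
    | 0 => ha
    | 1 => hb
    | _ + 2 => hc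
  exact h V hV

/-- The axiom `(ex)`, `((p ∧ q) ⊳ r) → (p ⊳ (q ⊳ r))`, with `p`, `q`, `r` encoded
as the letters `0`, `1`, `2`. -/
def exAxiom : CForm :=
  CForm.imp
    (CForm.cond (CForm.and (CForm.var 0) (CForm.var 1)) (CForm.var 2))
    (CForm.cond (CForm.var 0) (CForm.cond (CForm.var 1) (CForm.var 2)))

section Semantics

variable {X : Type} {le : X → X → Prop} {R : Set X → X → X → Prop} {V : ℕ → Set X}

theorem forall_mem_csat_imp_iff_subset (hrefl : ∀ x, le x x) {φ ψ : CForm} :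
    (∀ x, x ∈ csat le R V (CForm.imp φ ψ)) ↔ csat le R V φ ⊆ csat le R V ψ :=
  ⟨fun h x hx => h x x (hrefl x) hx, fun h _ _ _ hy => h hy⟩

theorem mem_csat_cond_cond_iff {φ ψ χ : CForm} {x : X} :
    x ∈ csat le R V (CForm.cond φ (CForm.cond ψ χ)) ↔
      {z | Relation.Comp (R (csat le R V φ)) (R (csat le R V ψ)) x z} ⊆ csat le R V χ :=
  ⟨fun h z ⟨y, hxy, hyz⟩ => h y hxy z hyz, fun h y hxy _ hyz => h ⟨y, hxy, hyz⟩⟩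

theorem forall_mem_csat_exAxiom_iff (hrefl : ∀ x, le x x) :
    (∀ x, x ∈ csat le R V exAxiom) ↔
      ∀ x, {w | R (V 0 ∩ V 1) x w} ⊆ V 2 →
        {z | Relation.Comp (R (V 0)) (R (V 1)) x z} ⊆ V 2 :=
  (forall_mem_csat_imp_iff_subset hrefl).trans <|
    forall_congr' fun _ => imp_congr Iff.rfl mem_csat_cond_cond_iff

end Semantics

theorem ex_correspondence_general {X : Type} {le : X → X → Prop} (hrefl : ∀ x, le x x)
    (htrans : ∀ ⦃x y z⦄, le x y → le y z → le x z) (R : Set X → X → X → Prop) :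
    (∀ V : ℕ → Set X, (∀ p, IsUpset le (V p)) → ∀ x, x ∈ csat le R V exAxiom) ↔
      ∀ a b : Set X, IsUpset le a → IsUpset le b →
        ∀ ⦃x y z : X⦄, R a x y → R b y z → ∃ w, R (a ∩ b) x w ∧ le w z :=
  calc
    _ ↔ ∀ a b c : Set X, IsUpset le a → IsUpset le b → IsUpset le c →
          ∀ x, {w | R (a ∩ b) x w} ⊆ c → {z | Relation.Comp (R a) (R b) x z} ⊆ c := by
      simp only [forall_mem_csat_exAxiom_iff hrefl]
      exact forall_seq_iff_forall_three fun a b c =>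
        ∀ x, {w | R (a ∩ b) x w} ⊆ c → {z | Relation.Comp (R a) (R b) x z} ⊆ c
    _ ↔ ∀ a b : Set X, IsUpset le a → IsUpset le b →
          ∀ x, {z | Relation.Comp (R a) (R b) x z} ⊆ upCl le {w | R (a ∩ b) x w} := by
      simp only [subset_upCl_iff_forall_isUpset hrefl htrans]
      exact ⟨fun h a b ha hb x c hc => h a b c ha hb hc x,
        fun h a b c ha hb hc x => h a b ha hb x c hc⟩
    _ ↔ _ :=
      ⟨fun h a b ha hb x y _ hxy hyz => h a b ha hb x ⟨y, hxy, hyz⟩,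
        fun h a b ha hb _ _ ⟨_, hxy, hyz⟩ => h a b ha hb hxy hyz⟩

/-- A conditional Kripke frame validates the axiom
`(ex)  ((p ∧ q) ⊳ r) → (p ⊳ (q ⊳ r))` iff for all upsets `a, b`:
`(R_a ∘ R_b) ⊆ (R_{a∩b} ∘ ≤)`. -/
theorem ex_correspondence (F : CondFrame) :
    F.valid (CForm.imp
      (CForm.cond (CForm.and (CForm.var 0) (CForm.var 1)) (CForm.var 2))
      (CForm.cond (CForm.var 0) (CForm.cond (CForm.var 1) (CForm.var 2)))) ↔
    ∀ a b : Set F.X, IsUpset F.le a → IsUpset F.le b →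
      ∀ ⦃x y z : F.X⦄, F.R a x y → F.R b y z →
        ∃ w, F.R (a ∩ b) x w ∧ F.le w z :=
  ex_correspondence_general F.le_refl F.le_trans F.R
end

section
/- For every set Γ of L_⊳-formulas and every L_⊳-formula φ: if φ ∈ ICK⊕Γ, then every conditional Kripke frame that validates all formulas of Γ also validates φ. -/
/-! The upsets of a frame form a conditional Heyting algebra: by the coherence condition,
`{x | R_a[x] ⊆ b}` is again an upset. A formula evaluates to its truth set there, so persistence of
truth is built in and soundness for frames reduces to soundness for algebras. In an algebra `φ ↔ ψ`
evaluates to `⊤` iff `φ` and `ψ` have the same value, which gives the congruence rules. -/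

theorem himp_himp_distrib {α : Type*} [GeneralizedHeytingAlgebra α] (a b c : α) :
    a ⇨ b ⇨ c = (a ⇨ b) ⇨ a ⇨ c := by
  rw [himp_himp, himp_himp, himp_inf_self, inf_comm]

section Algebra

variable {A : Type} [CondHeyting A]

theorem evalCHA_psubst (σ : ℕ → A) (τ : ℕ → CForm) (φ : CForm) :
    evalCHA σ (psubst τ φ) = evalCHA (fun p => evalCHA σ (τ p)) φ := by
  induction φ with
  | var p => rfl
  | bot => rfl
  | and φ ψ ihφ ihψ | or φ ψ ihφ ihψ | imp φ ψ ihφ ihψ | cond φ ψ ihφ ihψ =>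
    simp only [psubst, evalCHA, ihφ, ihψ]

theorem evalCHA_imp_eq_top_iff {σ : ℕ → A} {φ ψ : CForm} :
    evalCHA σ (CForm.imp φ ψ) = ⊤ ↔ evalCHA σ φ ≤ evalCHA σ ψ :=
  himp_eq_top_iff

theorem evalCHA_cIff_eq_top_iff {σ : ℕ → A} {φ ψ : CForm} :
    evalCHA σ (cIff φ ψ) = ⊤ ↔ evalCHA σ φ = evalCHA σ ψ := by
  rw [cIff, evalCHA, inf_eq_top_iff, evalCHA_imp_eq_top_iff, evalCHA_imp_eq_top_iff,
    le_antisymm_iff]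

theorem evalCHA_cTop (σ : ℕ → A) : evalCHA σ cTop = ⊤ :=
  himp_self

theorem ick_soundness_general {Γ : Set CForm} {φ : CForm} (h : ICK Γ φ)
    (hΓ : ∀ γ ∈ Γ, chaSat A γ) : chaSat A φ := by
  induction h with
  | prem hφ => exact hΓ _ hφ
  | a1 => exact fun _ => evalCHA_imp_eq_top_iff.2 inf_le_left
  | a2 => exact fun _ => evalCHA_imp_eq_top_iff.2 inf_le_right
  | a3 => exact fun _ => evalCHA_imp_eq_top_iff.2 (le_himp_iff.2 (himp_inf_distrib _ _ _).ge)
  | a4 => exact fun _ => evalCHA_imp_eq_top_iff.2 le_sup_left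
  | a5 => exact fun _ => evalCHA_imp_eq_top_iff.2 le_sup_right
  | a6 => exact fun _ => evalCHA_imp_eq_top_iff.2 (le_himp_iff.2 (sup_himp_distrib _ _ _).ge)
  | a7 => exact fun _ => evalCHA_imp_eq_top_iff.2 bot_le
  | a8 => exact fun _ => evalCHA_imp_eq_top_iff.2 le_himp
  | a9 => exact fun _ => evalCHA_imp_eq_top_iff.2 (himp_himp_distrib _ _ _).le
  | kc => exact fun _ => evalCHA_cIff_eq_top_iff.2 (CondHeyting.cond_inf _ _ _)
  | nc =>
    intro σ
    rw [evalCHA_cIff_eq_top_iff, evalCHA, evalCHA_cTop, CondHeyting.cond_top]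
  | subst τ _ ih => exact fun σ => (evalCHA_psubst σ τ _).trans (ih _)
  | mp _ _ ihImp ihφ =>
    exact fun σ => top_le_iff.1 ((ihφ σ).ge.trans (evalCHA_imp_eq_top_iff.1 (ihImp σ)))
  | congL _ ih =>
    exact fun σ => evalCHA_cIff_eq_top_iff.2
      (congrArg (CondHeyting.cond · _) (evalCHA_cIff_eq_top_iff.1 (ih σ)))
  | congR _ ih =>
    exact fun σ => evalCHA_cIff_eq_top_iff.2
      (congrArg (CondHeyting.cond _) (evalCHA_cIff_eq_top_iff.1 (ih σ)))

end Algebra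

namespace IsUpset

variable {X : Type} {le : X → X → Prop}

theorem union {a b : Set X} (ha : IsUpset le a) (hb : IsUpset le b) :
    IsUpset le (a ∪ b) :=
  fun _ _ hxy => Or.imp (ha hxy) (hb hxy)

theorem inter {a b : Set X} (ha : IsUpset le a) (hb : IsUpset le b) :
    IsUpset le (a ∩ b) :=
  fun _ _ hxy => And.imp (ha hxy) (hb hxy)

theorem himp (htrans : ∀ ⦃x y z⦄, le x y → le y z → le x z) (a b : Set X) :
    IsUpset le {x | ∀ y, le x y → y ∈ a → y ∈ b} :=
  fun _ _ hxy hx z hyz => hx z (htrans hxy hyz)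

theorem box {r : X → X → Prop} (hr : ∀ ⦃x y z⦄, le x y → r y z → ∃ w, r x w ∧ le w z)
    {b : Set X} (hb : IsUpset le b) : IsUpset le {x | ∀ y, r x y → y ∈ b} := by
  intro x y hxy hx z hyz
  obtain ⟨w, hxw, hwz⟩ := hr hxy hyz
  exact hb hwz (hx w hxw)

end IsUpset

namespace CondFrame

/-- The carrier of the complex algebra of a conditional Kripke frame: all its upsets, ordered by
inclusion. It is not an instance of `GenFrame.AUp`, which requires an antisymmetric order. -/
def Up (F : CondFrame) : Type := {a : Set F.X // IsUpset F.le a}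

variable {F : CondFrame}

instance : Lattice F.Up :=
  Subtype.lattice (fun _ _ => IsUpset.union) (fun _ _ => IsUpset.inter)

instance : HeytingAlgebra F.Up where
  top := ⟨Set.univ, fun _ _ _ _ => trivial⟩
  le_top a := Set.subset_univ a.1
  bot := ⟨∅, fun _ _ _ => id⟩
  bot_le a := Set.empty_subset a.1
  himp a b := ⟨{x | ∀ y, F.le x y → y ∈ a.1 → y ∈ b.1}, .himp F.le_trans a.1 b.1⟩
  compl a := ⟨{x | ∀ y, F.le x y → y ∈ a.1 → y ∈ (∅ : Set F.X)}, .himp F.le_trans a.1 ∅⟩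
  le_himp_iff a _ _ :=
    ⟨fun h x hx => h hx.1 x (F.le_refl x) hx.2,
      fun h _ hx _ hxy hy => h ⟨a.2 hxy hx, hy⟩⟩
  himp_bot _ := rfl

instance : CondHeyting F.Up where
  cond a b := ⟨{x | ∀ y, F.R a.1 x y → y ∈ b.1}, b.2.box (F.coh a.1 a.2)⟩
  cond_inf _ _ _ := Subtype.ext <| Set.ext fun _ => forall₂_and
  cond_top _ := Subtype.ext <| Set.eq_univ_of_forall fun _ _ _ => trivial

theorem val_evalCHA (σ : ℕ → F.Up) (φ : CForm) :
    (evalCHA σ φ).1 = csat F.le F.R (fun p => (σ p).1) φ := by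
  induction φ with
  | var p => rfl
  | bot => rfl
  | and φ ψ ihφ ihψ | or φ ψ ihφ ihψ | imp φ ψ ihφ ihψ | cond φ ψ ihφ ihψ =>
    rw [csat, ← ihφ, ← ihψ]
    rfl

theorem chaSat_up_iff_valid (F : CondFrame) {φ : CForm} : chaSat F.Up φ ↔ F.valid φ := by
  have eval_eq_top_iff (σ : ℕ → F.Up) :
      evalCHA σ φ = ⊤ ↔ ∀ x, x ∈ csat F.le F.R (fun p => (σ p).1) φ := by
    rw [← val_evalCHA, ← Set.eq_univ_iff_forall]
    exact Subtype.ext_iff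
  constructor
  · intro h V hV
    exact (eval_eq_top_iff fun p => ⟨V p, hV p⟩).1 (h _)
  · intro h σ
    exact (eval_eq_top_iff σ).2 (h _ fun p => (σ p).2)

end CondFrame

/-- Soundness: if `φ ∈ ICK ⊕ Γ`, then every conditional
Kripke frame validating all formulas of `Γ` validates `φ`. -/
theorem ick_soundness (Γ : Set CForm) (φ : CForm) (h : ICK Γ φ) :
    ∀ F : CondFrame, (∀ γ ∈ Γ, F.valid γ) → F.valid φ := by
  intro F hF
  exact F.chaSat_up_iff_valid.1 <|
    ick_soundness_general h fun γ hγ => F.chaSat_up_iff_valid.2 (hF γ hγ)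
end

section
/- Let f be a conditional bounded morphism between general models M = (G, V) and M' = (G', V'). Then for every world x of M and every L_⊳-formula φ: M, x ⊨ φ if and only if M', f(x) ⊨ φ. -/
/-- The operation `a → b` on sets of worlds, for a relation `le` standing for the order. -/
def upImp {X : Type*} (le : X → X → Prop) (a b : Set X) : Set X :=
  {x | ∀ y, le x y → y ∈ a → y ∈ b}

/-- The set `{x | r[x] ⊆ b}` of worlds all of whose `r`-successors lie in `b`. The operation
`a ⊳ b` is `relBox (R a) b`. -/
def relBox {X : Type*} (r : X → X → Prop) (b : Set X) : Set X :=
  {x | ∀ y, r x y → y ∈ b}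

/-- A family of admissible sets for the relations `le` and `R`: upsets containing `∅` and closed
under `∩`, `∪`, `→` and `⊳`. The full set needs no field of its own, being `∅ → ∅`. -/
structure IsAdmissibleFamily {X : Type} (le : X → X → Prop) (R : Set X → X → X → Prop)
    (A : Set (Set X)) : Prop where
  isUpset : ∀ a ∈ A, IsUpset le a
  empty_mem : ∅ ∈ A
  inter_mem : ∀ a ∈ A, ∀ b ∈ A, a ∩ b ∈ A
  union_mem : ∀ a ∈ A, ∀ b ∈ A, a ∪ b ∈ A
  upImp_mem : ∀ a ∈ A, ∀ b ∈ A, upImp le a b ∈ A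
  relBox_mem : ∀ a ∈ A, ∀ b ∈ A, relBox (R a) b ∈ A

theorem GenFrame.isAdmissibleFamily (G : GenFrame) : IsAdmissibleFamily G.le G.R G.A where
  isUpset := G.upA
  empty_mem := G.empty_mem
  inter_mem := G.inter_mem
  union_mem := G.union_mem
  upImp_mem := G.himp_mem
  relBox_mem := G.cimp_mem

/-- Bounded morphisms `f : (X, le) → (X', le')` in the sense of intuitionistic Kripke semantics:
condition (ii) of a conditional bounded morphism. -/
structure IsBoundedMorphism {X X' : Type*} (le : X → X → Prop) (le' : X' → X' → Prop)
    (f : X → X') : Prop where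
  forth : ∀ ⦃x y⦄, le x y → le' (f x) (f y)
  back : ∀ x z', le' (f x) z' → ∃ z, le x z ∧ f z = z'

/-- Bounded morphisms `f : (X, r) → (X', r')` whose back condition holds only up to `le'`.
Conditions (iii) and (iv) of a conditional bounded morphism say that `f` is one for
`r = R (f ⁻¹' a')` and `r' = R' a'`, for every admissible `a'`. -/
structure IsBoundedMorphismUpTo {X X' : Type*} (le' : X' → X' → Prop) (r : X → X → Prop)
    (r' : X' → X' → Prop) (f : X → X') : Prop where
  forth : ∀ ⦃x y⦄, r x y → r' (f x) (f y)
  back : ∀ x z', r' (f x) z' → ∃ z, r x z ∧ le' (f z) z'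

theorem IsBoundedMorphism.preimage_upImp {X X' : Type*} {le : X → X → Prop}
    {le' : X' → X' → Prop} {f : X → X'} (hf : IsBoundedMorphism le le' f) (a' b' : Set X') :
    f ⁻¹' upImp le' a' b' = upImp le (f ⁻¹' a') (f ⁻¹' b') := by
  ext x
  constructor
  · intro hx y hxy
    exact hx (f y) (hf.forth hxy)
  · intro hx z' hxz'
    obtain ⟨z, hxz, rfl⟩ := hf.back x z' hxz'
    exact hx z hxz

theorem IsBoundedMorphismUpTo.preimage_relBox {X : Type*} {X' : Type} {le' : X' → X' → Prop}
    {r : X → X → Prop} {r' : X' → X' → Prop} {f : X → X'}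
    (hf : IsBoundedMorphismUpTo le' r r' f) {b' : Set X'} (hb' : IsUpset le' b') :
    f ⁻¹' relBox r' b' = relBox r (f ⁻¹' b') := by
  ext x
  constructor
  · intro hx y hxy
    exact hx (f y) (hf.forth hxy)
  · intro hx z' hxz'
    obtain ⟨z, hxz, hzz'⟩ := hf.back x z' hxz'
    exact hb' hzz' (hx z hxz)

section Truth

variable {X : Type} {le : X → X → Prop} {R : Set X → X → X → Prop} {V : ℕ → Set X}

theorem csat_imp (φ ψ : CForm) :
    csat le R V (.imp φ ψ) = upImp le (csat le R V φ) (csat le R V ψ) :=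
  rfl

theorem csat_cond (φ ψ : CForm) :
    csat le R V (.cond φ ψ) = relBox (R (csat le R V φ)) (csat le R V ψ) :=
  rfl

theorem IsAdmissibleFamily.csat_mem {A : Set (Set X)} (hA : IsAdmissibleFamily le R A)
    (hV : ∀ p, V p ∈ A) (φ : CForm) : csat le R V φ ∈ A := by
  induction φ with
  | var p => exact hV p
  | bot => exact hA.empty_mem
  | and φ ψ hφ hψ => exact hA.inter_mem _ hφ _ hψ
  | or φ ψ hφ hψ => exact hA.union_mem _ hφ _ hψ
  | imp φ ψ hφ hψ => exact hA.upImp_mem _ hφ _ hψ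
  | cond φ ψ hφ hψ => exact hA.relBox_mem _ hφ _ hψ

theorem bounded_morphism_truth_general {X' : Type} {le' : X' → X' → Prop}
    {R' : Set X' → X' → X' → Prop} {A' : Set (Set X')} {V' : ℕ → Set X'} {f : X → X'}
    (hA' : IsAdmissibleFamily le' R' A') (hle : IsBoundedMorphism le le' f)
    (hR : ∀ a' ∈ A', IsBoundedMorphismUpTo le' (R (f ⁻¹' a')) (R' a') f)
    (hV' : ∀ p, V' p ∈ A') (hVV' : ∀ p, V p = f ⁻¹' V' p) (φ : CForm) :
    csat le R V φ = f ⁻¹' csat le' R' V' φ := by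
  induction φ with
  | var p => exact hVV' p
  | bot => rfl
  | and φ ψ ihφ ihψ => exact congrArg₂ (· ∩ ·) ihφ ihψ
  | or φ ψ ihφ ihψ => exact congrArg₂ (· ∪ ·) ihφ ihψ
  | imp φ ψ ihφ ihψ => rw [csat_imp, csat_imp, hle.preimage_upImp, ihφ, ihψ]
  | cond φ ψ ihφ ihψ =>
    -- `ihφ` turns the index of `R` into the preimage of an admissible set, so `hR` applies.
    have hφ : csat le' R' V' φ ∈ A' := hA'.csat_mem hV' φ
    have hψ : IsUpset le' (csat le' R' V' ψ) := hA'.isUpset _ (hA'.csat_mem hV' ψ)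
    rw [csat_cond, csat_cond, (hR _ hφ).preimage_relBox hψ, ihφ, ihψ]

end Truth

/-- Conditional bounded morphisms between general models
preserve and reflect truth:  `M, x ⊨ φ` iff `M', f(x) ⊨ φ`. -/
theorem bounded_morphism_truth (G G' : GenFrame) (f : G.X → G'.X)
    (hpre : ∀ a' ∈ G'.A, f ⁻¹' a' ∈ G.A)
    (hmono : ∀ ⦃x y : G.X⦄, G.le x y → G'.le (f x) (f y))
    (hback : ∀ (x : G.X) (z' : G'.X), G'.le (f x) z' →
      ∃ z : G.X, G.le x z ∧ f z = z')
    (hforth : ∀ a' ∈ G'.A, ∀ ⦃x y : G.X⦄,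
      G.R (f ⁻¹' a') x y → G'.R a' (f x) (f y))
    (hcback : ∀ a' ∈ G'.A, ∀ (x : G.X) (z' : G'.X), G'.R a' (f x) z' →
      ∃ z : G.X, G.R (f ⁻¹' a') x z ∧ G'.le (f z) z')
    (V : ℕ → Set G.X) (V' : ℕ → Set G'.X)
    (hV : ∀ p, V p ∈ G.A) (hV' : ∀ p, V' p ∈ G'.A)
    (hVV' : ∀ p, V p = f ⁻¹' (V' p))
    (x : G.X) (φ : CForm) :
    x ∈ csat G.le G.R V φ ↔ f x ∈ csat G'.le G'.R V' φ :=
  Set.ext_iff.mp (bounded_morphism_truth_general G'.isAdmissibleFamily ⟨hmono, hback⟩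
    (fun a' ha' => ⟨hforth a' ha', hcback a' ha'⟩) hV' hVV' φ) x
end

section
/- Let A be a conditional Heyting algebra and a, c ∈ A. Then θ(a ⊳ c) = {x | x is a prime filter of A and R^pf_a[x] ⊆ θ(c)}; that is, a prime filter x contains a ⊳ c if and only if every prime filter y with x R^pf_a y contains c. -/
/-! The map `a ⊳ ·` preserves finite meets, so it pulls the filter `x` back to the filter
`{b | a ⊳ b ∈ x}`, and the theorem says that this filter is the intersection of the prime filters
above it. Any filter `F` is: if `c ∉ F`, then `F` is disjoint from the principal ideal of `c`, and
the complement of a prime ideal separating the two is a prime filter above `F` that omits `c`. -/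

open Order

section Filter

variable {α β : Type*} [SemilatticeInf α]

theorem isPFilter_of_isUpperSet_of_infClosed {s : Set α} (hne : s.Nonempty)
    (hup : IsUpperSet s) (hinf : InfClosed s) : IsPFilter s :=
  .of_def hne (fun a ha b hb => ⟨a ⊓ b, hinf ha hb, inf_le_left, inf_le_right⟩)
    (fun hab ha => hup hab ha)

theorem isPFilter_preimage_infTopHom [OrderTop α] [SemilatticeInf β] [OrderTop β]
    (f : InfTopHom α β) (F : PFilter β) : IsPFilter (f ⁻¹' (F : Set β)) := by
  have hup : IsUpperSet (F : Set β) := fun _ _ hab ha => PFilter.mem_of_le hab ha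
  have hinf : InfClosed (F : Set β) := fun _ ha _ hb => PFilter.inf_mem ha hb
  have htop : f ⊤ ∈ F := by
    rw [map_top]
    exact PFilter.top_mem
  exact isPFilter_of_isUpperSet_of_infClosed ⟨⊤, htop⟩
    (hup.preimage (OrderHomClass.mono f)) (hinf.preimage f)

end Filter

section PrimeFilter

variable {α : Type} {β : Type*}

theorem IsPrimeFilter.isPFilter [Lattice α] {x : Set α} (hx : IsPrimeFilter x) : IsPFilter x := by
  obtain ⟨hne, -, hup, hinf, -⟩ := hx
  exact isPFilter_of_isUpperSet_of_infClosed hne (fun _ _ hab ha => hup ha hab)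
    (fun _ ha _ hb => hinf ha hb)

theorem isPrimeFilter_compl_of_isPrime [Lattice α] {J : Ideal α} (hJ : J.IsPrime) :
    IsPrimeFilter (J : Set α)ᶜ := by
  refine ⟨hJ.compl_filter.toPFilter.nonempty, Set.compl_ne_univ.2 J.nonempty,
    fun a b ha hab hb => ha (J.lower hab hb),
    fun a b ha hb hab => (hJ.mem_or_mem hab).elim ha hb, fun a b hab => ?_⟩
  by_contra! h
  exact hab (Ideal.sup_mem (Set.notMem_compl_iff.1 h.1) (Set.notMem_compl_iff.1 h.2))

variable [DistribLattice α]

theorem exists_isPrimeFilter_of_disjoint {F : PFilter α} {I : Ideal α}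
    (hFI : Disjoint (F : Set α) (I : Set α)) :
    ∃ y : Set α, IsPrimeFilter y ∧ (F : Set α) ⊆ y ∧ Disjoint y (I : Set α) := by
  obtain ⟨J, hJ, hIJ, hFJ⟩ := DistribLattice.prime_ideal_of_disjoint_filter_ideal hFI
  exact ⟨(J : Set α)ᶜ, isPrimeFilter_compl_of_isPrime hJ, hFJ.subset_compl_right,
    disjoint_compl_left.mono_right hIJ⟩

theorem exists_isPrimeFilter_of_notMem {F : PFilter α} {c : α} (hc : c ∉ F) :
    ∃ y : Set α, IsPrimeFilter y ∧ (F : Set α) ⊆ y ∧ c ∉ y := by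
  have hFc : Disjoint (F : Set α) (Ideal.principal c : Set α) :=
    Set.disjoint_left.2 fun b hb hbc => hc (PFilter.mem_of_le hbc hb)
  obtain ⟨y, hy, hFy, hyc⟩ := exists_isPrimeFilter_of_disjoint hFc
  exact ⟨y, hy, hFy, Set.disjoint_right.1 hyc Ideal.mem_principal_self⟩

theorem mem_iff_forall_isPrimeFilter (F : PFilter α) (c : α) :
    c ∈ F ↔ ∀ y : Set α, IsPrimeFilter y → (F : Set α) ⊆ y → c ∈ y := by
  refine ⟨fun hc y _ hFy => hFy hc, fun h => ?_⟩
  by_contra hc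
  obtain ⟨y, hy, hFy, hcy⟩ := exists_isPrimeFilter_of_notMem hc
  exact hcy (h y hy hFy)

theorem theta_cond_general [OrderTop α] [SemilatticeInf β] [OrderTop β]
    (f : InfTopHom α β) (F : PFilter β) (c : α) :
    f c ∈ F ↔ ∀ y : Set α, IsPrimeFilter y → f ⁻¹' (F : Set β) ⊆ y → c ∈ y :=
  mem_iff_forall_isPrimeFilter (isPFilter_preimage_infTopHom f F).toPFilter c

end PrimeFilter

/-- The operation `a ⊳ ·` of a conditional Heyting algebra, bundled as a map preserving finite
meets so that filters can be pulled back along it. -/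
def CondHeyting.condHom {A : Type} [CondHeyting A] (a : A) : InfTopHom A A where
  toFun := CondHeyting.cond a
  map_inf' := CondHeyting.cond_inf a
  map_top' := CondHeyting.cond_top a

/-- In a conditional Heyting algebra `A`, for `a, c ∈ A` a
prime filter `x` contains `a ⊳ c` iff every prime filter `y` with
`x R^pf_a y` (i.e. `{b | a ⊳ b ∈ x} ⊆ y`) contains `c`; that is,
`θ(a ⊳ c) = {x prime | R^pf_a[x] ⊆ θ(c)}`. -/
theorem theta_cond (A : Type) [CondHeyting A] (a c : A)
    (x : Set A) (hx : IsPrimeFilter x) :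
    CondHeyting.cond a c ∈ x ↔
      ∀ y : Set A, IsPrimeFilter y →
        {b : A | CondHeyting.cond a b ∈ x} ⊆ y → c ∈ y :=
  theta_cond_general (CondHeyting.condHom a) hx.isPFilter.toPFilter c
end
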